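/- arXiv:1603.09365 — 2 statements merged into one kernel-verified Lean document; each statement's English description precedes it below -/
import Mathlib

section
/- For every k ≥ 1 there exist idempotent cofinite ultrafilters p_j^(k) on FIN_j for every j ≥ 1 such that: (1) for all i, j ≥ 1 and every nondecreasing surjection f : {0,…,j} → {0,…,i}, f(p_j^(k)) = p_i^(k); (2) p_j^(k+1) = p_j^(k) for every j ≤ k; and (3) p_j^(k) + p_{j−1}^(k) = p_j^(k) for every j with 2 ≤ j ≤ k. -/
/-!
The idea: conditions (1)–(3) together force `p k j` to be independent of `k` for `k ≥ j`, so it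
suffices to find a single family `q j` satisfying (1) and `q (j + 1) + q j = q (j + 1)` for all `j`.

The families `p` of cofinite ultrafilters `p j` on `FIN j` with `f (p j) = p i` for all tetris maps
`f` form a nonempty compact right topological semigroup `Coherent` under coordinatewise addition
(`coherent_nonempty` takes the images of one nonprincipal ultrafilter under `n ↦ j • e_n`), so the
Ellis–Numakura lemma provides an idempotent coherent family.

Given an idempotent coherent `p` with `p (j + 1) + p j = p (j + 1)` for `j < k`, consider the
staircase `r j = p j + p (j - 1) + ⋯ + p 0`. It is again coherent (`staircase_coherent`): a tetris
map sends consecutive summands to equal or consecutive terms, and repetitions disappear by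
idempotency. Moreover `r j = p j` for `j ≤ k` and `r (k + 1) = p (k + 1) + p k`. Hence the coherent
families that agree with `p` up to `k` and satisfy `r (k + 1) + p k = r (k + 1)` form a nonempty
compact semigroup, and an idempotent of it extends the construction to `k + 1` (`exists_step`).
The diagonal of the resulting sequence of families is the required `q`.

Index `0` is included throughout: `FIN 0 = {0}`, so it is harmless and makes the induction uniform.
-/

open Filter

/-- `FIN k`: finitely supported functions `ℕ → {0,…,k}` attaining the maximum value `k`. -/
def FIN (k : ℕ) : Set (ℕ → ℕ) :=
  {b | (∀ n, b n ≤ k) ∧ {n | b n ≠ 0}.Finite ∧ ∃ n, b n = k}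

/-- `Supp b < Supp b'`. -/
def SuppLT (b b' : ℕ → ℕ) : Prop :=
  ∀ m, b m ≠ 0 → ∀ m', b' m' ≠ 0 → m < m'

/-- `f` is (the extension to `ℕ` of) a nondecreasing surjection `{0,…,j} → {0,…,i}`. -/
def IsTetrisFn (j i : ℕ) (f : ℕ → ℕ) : Prop :=
  (∀ l l', l' ≤ l → l ≤ j → f l' ≤ f l) ∧ (∀ l, l ≤ j → f l ≤ i) ∧
    ∀ m, m ≤ i → ∃ l, l ≤ j ∧ f l = m

/-- An ultrafilter is cofinite if for every `n` the set of `b` with `b n = 0` belongs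
to it. -/
def IsCofinite (U : Ultrafilter (ℕ → ℕ)) : Prop := ∀ n, {b : ℕ → ℕ | b n = 0} ∈ U

/-- `A ∈ U + V`. -/
def memSum (U V : Ultrafilter (ℕ → ℕ)) (A : Set (ℕ → ℕ)) : Prop :=
  ∀ᶠ b in (U : Filter (ℕ → ℕ)), ∀ᶠ b' in (V : Filter (ℕ → ℕ)),
    SuppLT b b' ∧ b + b' ∈ A

/-- The generalized tetris operation `b ↦ f ∘ b`. -/
def tetrisMap (f : ℕ → ℕ) : (ℕ → ℕ) → ℕ → ℕ := fun b => f ∘ b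

attribute [local instance] Ultrafilter.addSemigroup

/-! ### Sums of cofinite ultrafilters -/

/-- `U` is a cofinite ultrafilter on `FIN j`. -/
def IsFinUlt (j : ℕ) (U : Ultrafilter (ℕ → ℕ)) : Prop := FIN j ∈ U ∧ IsCofinite U

lemma eventually_suppLT {b : ℕ → ℕ} (hb : {n | b n ≠ 0}.Finite) {V : Ultrafilter (ℕ → ℕ)}
    (hV : IsCofinite V) : ∀ᶠ b' in (V : Filter (ℕ → ℕ)), SuppLT b b' := by
  obtain ⟨N, hN⟩ := hb.bddAbove
  have h : ∀ᶠ b' in (V : Filter (ℕ → ℕ)), ∀ n ∈ Set.Iic N, b' n = 0 :=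
    (Set.finite_Iic N).eventually_all.2 fun n _ => hV n
  filter_upwards [h] with b' hb' m hm m' hm'
  by_contra hlt
  exact hm' (hb' m' ((not_lt.1 hlt).trans (hN hm)))

/-- The sum of the statement agrees with Mathlib's sum of ultrafilters on `ℕ → ℕ`, since the
condition on supports holds almost everywhere. -/
lemma memSum_iff {j : ℕ} {U V : Ultrafilter (ℕ → ℕ)} (hU : FIN j ∈ U) (hV : IsCofinite V)
    (A : Set (ℕ → ℕ)) : memSum U V A ↔ A ∈ U + V := by
  have h : A ∈ U + V ↔ ∀ᶠ b in (U : Filter (ℕ → ℕ)), ∀ᶠ b' in (V : Filter (ℕ → ℕ)), b + b' ∈ A :=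
    Ultrafilter.eventually_add U V (· ∈ A)
  rw [h, memSum]
  refine eventually_congr ?_
  filter_upwards [hU] with b hb
  refine eventually_congr ?_
  filter_upwards [eventually_suppLT hb.2.1 hV] with b' hb'
  simp [hb']

lemma SuppLT.eq_zero_or {b b' : ℕ → ℕ} (h : SuppLT b b') (n : ℕ) : b n = 0 ∨ b' n = 0 := by
  by_contra! hn
  exact lt_irrefl _ (h n hn.1 n hn.2)

lemma FIN_add {i j : ℕ} (hij : i ≤ j) {b b' : ℕ → ℕ} (hb : b ∈ FIN j) (hb' : b' ∈ FIN i)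
    (h : SuppLT b b') : b + b' ∈ FIN j := by
  refine ⟨fun n => ?_, (hb.2.1.union hb'.2.1).subset fun n hn => ?_, ?_⟩
  · have := hb.1 n
    have := hb'.1 n
    rcases h.eq_zero_or n with h0 | h0 <;> simp only [Pi.add_apply, h0] <;> omega
  · simp only [Set.mem_ofPred_eq, Pi.add_apply, Set.mem_union] at hn ⊢
    omega
  · obtain ⟨n, hn⟩ := hb.2.2
    refine ⟨n, ?_⟩
    have := hb'.1 n
    rcases h.eq_zero_or n with h0 | h0 <;> simp only [Pi.add_apply] <;> omega

lemma IsFinUlt.add {i j : ℕ} (hij : i ≤ j) {U V : Ultrafilter (ℕ → ℕ)} (hU : IsFinUlt j U)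
    (hV : IsFinUlt i V) : IsFinUlt j (U + V) := by
  refine ⟨(memSum_iff hU.1 hV.2 _).1 ?_, fun n => (memSum_iff hU.1 hV.2 _).1 ?_⟩
  · filter_upwards [hU.1] with b hb
    filter_upwards [eventually_suppLT hb.2.1 hV.2, hV.1] with b' h hb'
    exact ⟨h, FIN_add hij hb hb' h⟩
  · filter_upwards [hU.1, hU.2 n] with b hb hbn
    filter_upwards [eventually_suppLT hb.2.1 hV.2, hV.2 n] with b' h hbn'
    refine ⟨h, ?_⟩
    change b n + b' n = 0
    change b n = 0 at hbn
    change b' n = 0 at hbn'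
    omega

lemma IsTetrisFn.map_zero {j i : ℕ} {f : ℕ → ℕ} (hf : IsTetrisFn j i f) : f 0 = 0 := by
  obtain ⟨l, hl, h⟩ := hf.2.2 0 (Nat.zero_le _)
  have := hf.1 l 0 (Nat.zero_le _) hl
  omega

lemma IsTetrisFn.map_top {j i : ℕ} {f : ℕ → ℕ} (hf : IsTetrisFn j i f) : f j = i := by
  obtain ⟨l, hl, h⟩ := hf.2.2 i le_rfl
  have := hf.1 j l hl le_rfl
  have := hf.2.1 j le_rfl
  omega

lemma tetrisMap_add {f : ℕ → ℕ} (hf : f 0 = 0) {b b' : ℕ → ℕ} (h : SuppLT b b') :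
    tetrisMap f (b + b') = tetrisMap f b + tetrisMap f b' := by
  funext n
  rcases h.eq_zero_or n with h0 | h0 <;> simp [tetrisMap, h0, hf]

lemma map_tetrisMap_add {j i : ℕ} {U V : Ultrafilter (ℕ → ℕ)} (hU : IsFinUlt j U)
    (hV : IsFinUlt i V) {f : ℕ → ℕ} (hf : f 0 = 0) :
    (U + V).map (tetrisMap f) = U.map (tetrisMap f) + V.map (tetrisMap f) := by
  ext A
  have h1 : A ∈ (U + V).map (tetrisMap f) ↔ ∀ᶠ b in (U : Filter (ℕ → ℕ)),
      ∀ᶠ b' in (V : Filter (ℕ → ℕ)), tetrisMap f (b + b') ∈ A :=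
    Ultrafilter.eventually_add U V (fun b => tetrisMap f b ∈ A)
  have h2 : A ∈ U.map (tetrisMap f) + V.map (tetrisMap f) ↔ ∀ᶠ b in (U : Filter (ℕ → ℕ)),
      ∀ᶠ b' in (V : Filter (ℕ → ℕ)), tetrisMap f b + tetrisMap f b' ∈ A :=
    Ultrafilter.eventually_add (U.map (tetrisMap f)) (V.map (tetrisMap f)) (· ∈ A)
  rw [h1, h2]
  refine eventually_congr ?_
  filter_upwards [hU.1] with b hb
  refine eventually_congr ?_
  filter_upwards [eventually_suppLT hb.2.1 hV.2] with b' hb'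
  rw [tetrisMap_add hf hb']

/-! ### The compact semigroup of coherent families -/

/-- The families `p`, with `p j` a cofinite ultrafilter on `FIN j`, that are compatible with all
tetris maps. -/
def Coherent : Set (ℕ → Ultrafilter (ℕ → ℕ)) :=
  {p | (∀ j, IsFinUlt j (p j)) ∧
    ∀ j i f, IsTetrisFn j i f → (p j).map (tetrisMap f) = p i}

lemma continuous_map_ultrafilter {α β : Type*} (g : α → β) :
    Continuous (Ultrafilter.map g : Ultrafilter α → Ultrafilter β) := by
  refine continuous_generateFrom_iff.2 ?_
  rintro _ ⟨s, rfl⟩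
  exact ultrafilter_isOpen_basic (g ⁻¹' s)

lemma isClosed_coherent : IsClosed Coherent := by
  have h1 : IsClosed {p : ℕ → Ultrafilter (ℕ → ℕ) | ∀ j, IsFinUlt j (p j)} := by
    simp only [IsFinUlt, IsCofinite, Set.ofPred_forall, Set.ofPred_and]
    have hmem : ∀ (j : ℕ) (A : Set (ℕ → ℕ)),
        IsClosed {p : ℕ → Ultrafilter (ℕ → ℕ) | A ∈ p j} := fun j A => by
      have h : Continuous fun p : ℕ → Ultrafilter (ℕ → ℕ) => p j := continuous_apply j
      exact (ultrafilter_isClosed_basic A).preimage h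
    exact isClosed_iInter fun j => (hmem j _).inter (isClosed_iInter fun n => hmem j _)
  have h2 : IsClosed {p : ℕ → Ultrafilter (ℕ → ℕ) |
      ∀ j i f, IsTetrisFn j i f → (p j).map (tetrisMap f) = p i} := by
    simp only [Set.ofPred_forall]
    exact isClosed_iInter fun j => isClosed_iInter fun i => isClosed_iInter fun f =>
      isClosed_iInter fun _ => isClosed_eq
        ((continuous_map_ultrafilter _).comp (continuous_apply j)) (continuous_apply i)
  exact h1.inter h2

lemma coherent_add {p q : ℕ → Ultrafilter (ℕ → ℕ)} (hp : p ∈ Coherent) (hq : q ∈ Coherent) :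
    p + q ∈ Coherent := by
  refine ⟨fun j => (hp.1 j).add le_rfl (hq.1 j), fun j i f hf => ?_⟩
  rw [Pi.add_apply, map_tetrisMap_add (hp.1 j) (hq.1 j) hf.map_zero, hp.2 j i f hf, hq.2 j i f hf,
    Pi.add_apply]

lemma coherent_nonempty : Coherent.Nonempty := by
  refine ⟨fun j => (hyperfilter ℕ).map fun n => Pi.single n j, fun j => ⟨?_, fun m => ?_⟩,
    fun j i f hf => ?_⟩
  · refine Ultrafilter.mem_map.2 (univ_mem' fun n => ⟨fun m => ?_, ?_, n, by simp⟩)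
    · by_cases h : m = n
      · subst h; simp
      · simp [h]
    · refine (Set.finite_singleton n).subset fun m hm => ?_
      by_contra h
      exact hm (Pi.single_eq_of_ne h _)
  · have h : ({m}ᶜ : Set ℕ) ∈ hyperfilter ℕ :=
      (Set.finite_singleton m).compl_mem_hyperfilter
    refine Ultrafilter.mem_map.2 (mem_of_superset h fun n hn => ?_)
    exact Pi.single_eq_of_ne (Ne.symm hn) _
  · rw [Ultrafilter.map_map]
    congr 1
    funext n m
    by_cases h : m = n
    · subst h; simp [tetrisMap, hf.map_top]
    · simp [tetrisMap, h, hf.map_zero]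

/-- The Ellis–Numakura lemma for families of ultrafilters. -/
lemma exists_idempotent_mem {S : Set (ℕ → Ultrafilter (ℕ → ℕ))} (hne : S.Nonempty)
    (hS : IsClosed S) (hadd : ∀ x ∈ S, ∀ y ∈ S, x + y ∈ S) : ∃ p ∈ S, p + p = p := by
  have hcont : ∀ r : ℕ → Ultrafilter (ℕ → ℕ), Continuous (· + r) := fun r =>
    continuous_pi fun j => by
      have h : Continuous fun a : ℕ → Ultrafilter (ℕ → ℕ) => a j := continuous_apply j
      exact (Ultrafilter.continuous_add_left (r j)).comp h
  exact exists_idempotent_in_compact_add_subsemigroup hcont S hne hS.isCompact hadd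

/-! ### The staircase sums -/

/-- The staircase `p j + p (j - 1) + ⋯ + p 0`. -/
def staircase (p : ℕ → Ultrafilter (ℕ → ℕ)) : ℕ → Ultrafilter (ℕ → ℕ)
  | 0 => p 0
  | j + 1 => p (j + 1) + staircase p j

lemma add_staircase {p : ℕ → Ultrafilter (ℕ → ℕ)} (hp : p + p = p) (j : ℕ) :
    p j + staircase p j = staircase p j := by
  have h : p j + p j = p j := congrFun hp j
  cases j with
  | zero => exact h
  | succ j => rw [staircase, ← add_assoc, h]

lemma staircase_isFinUlt {p : ℕ → Ultrafilter (ℕ → ℕ)} (hp : p ∈ Coherent) (j : ℕ) :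
    IsFinUlt j (staircase p j) := by
  induction j with
  | zero => exact hp.1 0
  | succ j ih => exact (hp.1 (j + 1)).add (Nat.le_succ j) ih

/-- Restricting a tetris map to `{0,…,j}` gives a tetris map onto `{0,…,i}` or `{0,…,i-1}`. -/
lemma IsTetrisFn.restrict {j i : ℕ} {f : ℕ → ℕ} (hf : IsTetrisFn (j + 1) i f) :
    IsTetrisFn j i f ∨ ∃ i', i = i' + 1 ∧ IsTetrisFn j i' f := by
  have hmono : ∀ l l', l' ≤ l → l ≤ j → f l' ≤ f l := fun l l' h h' => hf.1 l l' h (by omega)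
  have htop := hf.map_top
  -- every value below `f (j + 1) = i` is already attained on `{0,…,j}`
  have hval : ∀ m, m < i → ∃ l, l ≤ j ∧ f l = m := by
    intro m hm
    obtain ⟨l, hl, h⟩ := hf.2.2 m hm.le
    refine ⟨l, ?_, h⟩
    by_contra hlj
    have : l = j + 1 := by omega
    subst this
    omega
  have hj := hf.2.1 j (Nat.le_succ j)
  rcases hj.eq_or_lt with h | h
  · refine Or.inl ⟨hmono, fun l hl => h ▸ hmono j l hl le_rfl, fun m hm => ?_⟩
    rcases hm.eq_or_lt with rfl | hm
    · exact ⟨j, le_rfl, h⟩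
    · exact hval m hm
  · refine Or.inr ⟨i - 1, by omega, hmono, fun l hl => ?_, fun m hm => hval m (by omega)⟩
    have := hmono j l hl le_rfl
    omega

lemma staircase_coherent {p : ℕ → Ultrafilter (ℕ → ℕ)} (hp : p ∈ Coherent) (hpp : p + p = p) :
    staircase p ∈ Coherent := by
  refine ⟨staircase_isFinUlt hp, fun j => ?_⟩
  induction j with
  | zero =>
    intro i f hf
    have hi : i = 0 := hf.map_top.symm.trans hf.map_zero
    subst hi
    exact hp.2 0 0 f hf
  | succ j ih =>
    intro i f hf
    rw [staircase, map_tetrisMap_add (hp.1 _) (staircase_isFinUlt hp j) hf.map_zero,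
      hp.2 _ _ f hf]
    rcases hf.restrict with h | ⟨i', rfl, h⟩
    · rw [ih i f h, add_staircase hpp]
    · rw [ih i' f h, staircase]

lemma staircase_eq {p : ℕ → Ultrafilter (ℕ → ℕ)} {k : ℕ}
    (h : ∀ j < k, p (j + 1) + p j = p (j + 1)) : ∀ j ≤ k, staircase p j = p j := by
  intro j
  induction j with
  | zero => exact fun _ => rfl
  | succ j ih =>
    intro hj
    rw [staircase, ih (by omega), h j (by omega)]

/-! ### The inductive construction -/

/-- Idempotent coherent families that absorb on the right, `p (j + 1) + p j = p (j + 1)`, up to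
level `k`. -/
def Stage (k : ℕ) : Set (ℕ → Ultrafilter (ℕ → ℕ)) :=
  {p | p ∈ Coherent ∧ p + p = p ∧ ∀ j < k, p (j + 1) + p j = p (j + 1)}

lemma exists_stage_zero : ∃ p, p ∈ Stage 0 := by
  obtain ⟨p, hp, hpp⟩ := exists_idempotent_mem coherent_nonempty isClosed_coherent
    fun x hx y hy => coherent_add hx hy
  exact ⟨p, hp, hpp, fun j hj => absurd hj (Nat.not_lt_zero j)⟩

lemma exists_step {k : ℕ} {p : ℕ → Ultrafilter (ℕ → ℕ)} (hp : p ∈ Stage k) :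
    ∃ r ∈ Stage (k + 1), ∀ j ≤ k, r j = p j := by
  obtain ⟨hc, hpp, habs⟩ := hp
  have hidem : ∀ j, p j + p j = p j := fun j => congrFun hpp j
  let S : Set (ℕ → Ultrafilter (ℕ → ℕ)) :=
    Coherent ∩ ({r | ∀ j, j ≤ k → r j = p j} ∩ {r | r (k + 1) + p k = r (k + 1)})
  have hcl : IsClosed S := by
    refine isClosed_coherent.inter (IsClosed.inter ?_ ?_)
    · simp only [Set.ofPred_forall]
      exact isClosed_iInter fun j => isClosed_iInter fun _ =>
        isClosed_eq (continuous_apply j) continuous_const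
    · exact isClosed_eq ((Ultrafilter.continuous_add_left (p k)).comp (continuous_apply (k + 1)))
        (continuous_apply (k + 1))
  have hne : S.Nonempty := by
    refine ⟨staircase p, staircase_coherent hc hpp, staircase_eq habs, ?_⟩
    simp only [Set.mem_ofPred_eq, staircase]
    rw [staircase_eq habs k le_rfl, add_assoc, hidem]
  obtain ⟨r, ⟨hrc, hrp, hrk⟩, hrr⟩ := exists_idempotent_mem hne hcl (by
    rintro x ⟨hx, hxp, hxk⟩ y ⟨hy, hyp, hyk⟩
    refine ⟨coherent_add hx hy, fun j hj => ?_, ?_⟩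
    · rw [Pi.add_apply, hxp j hj, hyp j hj, hidem]
    · simp only [Set.mem_ofPred_eq, Pi.add_apply] at hyk ⊢
      rw [add_assoc, hyk])
  refine ⟨r, ⟨hrc, hrr, fun j hj => ?_⟩, hrp⟩
  rcases (Nat.lt_succ_iff.1 hj).eq_or_lt with rfl | hj
  · rw [hrp j le_rfl]
    exact hrk
  · rw [hrp (j + 1) hj, hrp j hj.le, habs j hj]

/-- The diagonal of a sequence of successively extended stages. -/
lemma exists_limit : ∃ q ∈ Coherent, q + q = q ∧ ∀ j, q (j + 1) + q j = q (j + 1) := by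
  obtain ⟨p₀, hp₀⟩ := exists_stage_zero
  choose! step hstep hagree using
    fun (k : ℕ) (p : ℕ → Ultrafilter (ℕ → ℕ)) (hp : p ∈ Stage k) => exists_step hp
  let P : ℕ → ℕ → Ultrafilter (ℕ → ℕ) := fun k => Nat.rec p₀ step k
  have hP : ∀ k, P k ∈ Stage k := by
    intro k
    induction k with
    | zero => exact hp₀
    | succ k ih => exact hstep k _ ih
  have hdiag : ∀ j k, j ≤ k → P k j = P j j := by
    intro j k hjk
    induction k, hjk using Nat.le_induction with
    | base => rfl
    | succ k hjk ih => exact (hagree k (P k) (hP k) j hjk).trans ih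
  refine ⟨fun j => P j j, ⟨fun j => (hP j).1.1 j, fun j i f hf => ?_⟩, ?_, fun j => ?_⟩
  · -- both sides are compared inside one stage beyond `i` and `j`
    have h := (hP (max j i)).1.2 j i f hf
    rwa [hdiag j _ (le_max_left _ _), hdiag i _ (le_max_right _ _)] at h
  · funext j
    exact congrFun (hP j).2.1 j
  · have h := (hP (j + 1)).2.2 j (Nat.lt_succ_self j)
    rwa [hdiag j (j + 1) (Nat.le_succ j)] at h

/-- There exists a family `p k j` (for `k, j ≥ 1`) of idempotent cofinite ultrafilters
on `FIN j` such that: (1) for `i, j ≥ 1` and any nondecreasing surjection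
`f : {0,…,j} → {0,…,i}` one has `f(p_j^(k)) = p_i^(k)`; (2) `p_j^(k+1) = p_j^(k)` for
`j ≤ k`; (3) `p_j^(k) + p_{j-1}^(k) = p_j^(k)` for `2 ≤ j ≤ k`. -/
theorem exists_idempotent_family :
    ∃ p : ℕ → ℕ → Ultrafilter (ℕ → ℕ),
      (∀ k j, 1 ≤ k → 1 ≤ j →
        (FIN j ∈ p k j ∧ IsCofinite (p k j)) ∧
        (∀ A : Set (ℕ → ℕ), memSum (p k j) (p k j) A ↔ A ∈ p k j)) ∧
      (∀ k, 1 ≤ k → ∀ i j, 1 ≤ i → 1 ≤ j →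
        ∀ f : ℕ → ℕ, IsTetrisFn j i f → (p k j).map (tetrisMap f) = p k i) ∧
      (∀ k j, 1 ≤ k → 1 ≤ j → j ≤ k → p (k + 1) j = p k j) ∧
      (∀ k j, 2 ≤ j → j ≤ k →
        ∀ A : Set (ℕ → ℕ), memSum (p k j) (p k (j - 1)) A ↔ A ∈ p k j) := by
  obtain ⟨q, hq, hqq, habs⟩ := exists_limit
  refine ⟨fun _ j => q j, fun k j _ _ => ⟨hq.1 j, fun A => ?_⟩,
    fun k _ i j _ _ f hf => hq.2 j i f hf, fun _ _ _ _ _ => rfl, fun k j hj _ A => ?_⟩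
  · rw [memSum_iff (hq.1 j).1 (hq.1 j).2]
    exact iff_of_eq (congrArg (A ∈ ·) (congrFun hqq j))
  · obtain ⟨j, rfl⟩ : ∃ j', j = j' + 1 := ⟨j - 1, by omega⟩
    rw [Nat.add_sub_cancel, memSum_iff (hq.1 (j + 1)).1 (hq.1 j).2, habs j]
end

section
/- There exists a sequence (q_j)_{j≥1}, where each q_j is a cofinite ultrafilter on FIN_j, such that M_j ∈ q_j for every j ≥ 1 and f(q_j) = q_i for all i, j ≥ 1 and every nondecreasing surjection f : {0,…,j} → {0,…,i}. (In particular, the set Σ₁ of sequences of cofinite ultrafilters coherent under all generalized tetris operations is nonempty.) -/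
/-!
Fix a nonprincipal ultrafilter on `ℕ` and let `q j` be its image under the map sending `n` to
the function with value `j` at `n` and `0` elsewhere. These functions lie in `Mset j`, and each
coordinate vanishes for all but one `n`, so `q j` is cofinite. A nondecreasing surjection
`{0,…,j} → {0,…,i}` sends `0` to `0` and `j` to `i`, hence carries the point function of height
`j` at `n` to that of height `i` at `n`; this gives coherence.
-/

open Filter

/-- `M j`: the elements of `FIN j` taking only the values `0` and `j`. -/
def Mset (j : ℕ) : Set (ℕ → ℕ) := {b | b ∈ FIN j ∧ ∀ n, b n = 0 ∨ b n = j}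

/-- There is a sequence `(q_j)` of cofinite ultrafilters on `FIN j` with `M_j ∈ q_j` for
every `j ≥ 1`, coherent under all generalized tetris operations: `f(q_j) = q_i` for all
`i, j ≥ 1` and nondecreasing surjections `f : {0,…,j} → {0,…,i}`. -/
theorem sigma_one_nonempty :
    ∃ q : ℕ → Ultrafilter (ℕ → ℕ),
      ∀ j, 1 ≤ j →
        (FIN j ∈ q j ∧ IsCofinite (q j)) ∧ Mset j ∈ q j ∧
        ∀ i, 1 ≤ i → ∀ f : ℕ → ℕ, IsTetrisFn j i f → (q j).map (tetrisMap f) = q i := by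
  refine ⟨fun j => (hyperfilter ℕ).map (fun n m => if m = n then j else 0), fun j _ => ?_⟩
  have hFIN : ∀ n, (fun m => if m = n then j else 0) ∈ FIN j := by
    intro n
    refine ⟨fun m => ?_, (Set.finite_singleton n).subset fun m hm => ?_, n, by simp⟩
    · dsimp only
      split_ifs <;> simp
    · by_contra h
      exact hm (if_neg h)
  refine ⟨⟨?_, fun k => ?_⟩, ?_, fun i _ f hf => ?_⟩
  · rw [Ultrafilter.mem_map]
    exact univ_mem' hFIN
  · rw [Ultrafilter.mem_map]
    have hk : ({k}ᶜ : Set ℕ) ∈ hyperfilter ℕ :=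
      compl_mem_hyperfilter_of_finite (Set.finite_singleton k)
    filter_upwards [hk] with n hn
    exact if_neg fun h => hn h.symm
  · rw [Ultrafilter.mem_map]
    refine univ_mem' fun n => ⟨hFIN n, fun m => ?_⟩
    dsimp only
    split_ifs <;> simp
  · obtain ⟨hmono, hle, hsurj⟩ := hf
    have h0 : f 0 = 0 := by
      obtain ⟨l, hl, hfl⟩ := hsurj 0 (Nat.zero_le _)
      have := hmono l 0 (Nat.zero_le _) hl
      omega
    have hj : f j = i := by
      obtain ⟨l, hl, hfl⟩ := hsurj i le_rfl
      have h1 := hmono j l hl le_rfl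
      have h2 := hle j le_rfl
      omega
    rw [Ultrafilter.map_map]
    congr 1
    funext n m
    simp only [tetrisMap, Function.comp_apply]
    split_ifs <;> assumption
end
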